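/- Let n ≥ 1 and ν > 0. There exists a constant C₁* > 0, depending only on the dimension n and on ν, with the following property. Let T = 1, let b₁,…,bₙ : [0,1]×ℝⁿ → ℝ be bounded with bounded continuous first-order spatial derivatives and parabolically Hölder continuous, with |b|₀ ≤ C_b⁰ and |b|_{0,1} ≤ C_b¹ for finite constants C_b⁰, C_b¹, and let f : ℝⁿ → ℝ be continuously differentiable with |f|₁ := |f|₀ + Σⱼ|∂f/∂xⱼ|₀ ≤ C_f¹ < ∞. Then every bounded classical solution u ∈ C^{1,2} of the Cauchy problem ∂u/∂t = νΔu + Σ_{i=1}^n bᵢ ∂u/∂xᵢ on (0,1)×ℝⁿ with u(0,·) = f, whose first spatial derivatives are bounded, satisfies |u|_{0,1} ≤ (1 + C_b⁰·C₁*)·|f|₁. -/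

import Mathlib

open Set

noncomputable section

abbrev E (n : ℕ) := EuclideanSpace ℝ (Fin n)

/-- Partial derivative of `f` in the `j`-th coordinate direction. -/
noncomputable def pd {n : ℕ} (f : E n → ℝ) (j : Fin n) (x : E n) : ℝ :=
  fderiv ℝ f x (EuclideanSpace.single j 1)

/-- Supremum norm `|w|₀` over the domain `[0,T] × ℝⁿ`. -/
noncomputable def sup0 {n : ℕ} (T : ℝ) (w : ℝ → E n → ℝ) : ℝ :=
  ⨆ (t : Icc (0:ℝ) T) (x : E n), |w t.1 x|

/-- The norm `|w|_{0,1} = |w|₀ + Σⱼ |∂w/∂xⱼ|₀` over `[0,T] × ℝⁿ`. -/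
noncomputable def norm01 {n : ℕ} (T : ℝ) (w : ℝ → E n → ℝ) : ℝ :=
  sup0 T w + ∑ j : Fin n, sup0 T fun t x => pd (w t) j x

/-- Supremum norm `|f|₀` over `ℝⁿ`. -/
noncomputable def supS {n : ℕ} (f : E n → ℝ) : ℝ := ⨆ x : E n, |f x|

/-- The norm `|f|₁ = |f|₀ + Σⱼ |∂f/∂xⱼ|₀` on `ℝⁿ`. -/
noncomputable def norm1f {n : ℕ} (f : E n → ℝ) : ℝ := supS f + ∑ j : Fin n, supS (pd f j)

open Filter Topology

theorem IsLocalMax.second_deriv_nonpos {φ φ' : ℝ → ℝ} {q a : ℝ} (hmax : IsLocalMax φ a)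
    (h1 : ∀ h, HasDerivAt φ (φ' h) h) (h2 : HasDerivAt φ' q a) : q ≤ 0 := by
  by_contra! hq
  have hd : deriv φ = φ' := funext fun h => (h1 h).deriv
  have h0 : φ' a = 0 := hmax.hasDerivAt_eq_zero (h1 a)
  have hmin : IsLocalMin φ a := isLocalMin_of_deriv_deriv_pos
    (by rw [hd, h2.deriv]; exact hq) (by rw [hd, h0]) (h1 a).continuousAt
  have hc : φ =ᶠ[𝓝 a] fun _ => φ a := by
    filter_upwards [hmax, hmin] with y hy hy'
    exact le_antisymm hy hy'
  have hc' : φ' =ᶠ[𝓝 a] fun _ => (0 : ℝ) := by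
    have := hc.deriv
    rw [hd] at this
    simpa using this
  have : q = 0 := by
    rw [← h2.deriv, hc'.deriv_eq]; simp
  exact hq.ne' this

theorem HasDerivAt.nonneg_of_isMaxOn_Icc {φ : ℝ → ℝ} {p s t : ℝ} (hst : s < t)
    (h : HasDerivAt φ p t) (hmax : ∀ r ∈ Icc s t, φ r ≤ φ t) : 0 ≤ p := by
  have h1 := h.hasDerivWithinAt (s := Iio t)
  rw [hasDerivWithinAt_iff_tendsto_slope' (by simp)] at h1
  refine ge_of_tendsto h1 ?_
  filter_upwards [Ioo_mem_nhdsLT hst] with r hr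
  rw [slope_def_field]
  exact div_nonneg_of_nonpos (by linarith [hmax r ⟨hr.1.le, hr.2.le⟩]) (by linarith [hr.2])

theorem norm_sq_add_smul_single {n : ℕ} (x : E n) (j : Fin n) (h : ℝ) :
    ‖x + h • (EuclideanSpace.single j 1 : E n)‖ ^ 2 = ‖x‖ ^ 2 + 2 * h * x j + h ^ 2 := by
  rw [norm_add_sq_real, inner_smul_right, norm_smul]
  simp [EuclideanSpace.inner_single_right]
  ring

/-- Parabolic maximum principle on `[s,T] × H` for functions bounded above. -/
theorem parabolic_max_principle {n : ℕ} {ν B C s T : ℝ} (hν : 0 ≤ ν) (hB : 0 ≤ B)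
    {H : Set (E n)} (hH : IsClosed H) {w : ℝ → E n → ℝ}
    (hcont : ContinuousOn (fun p : ℝ × E n => w p.1 p.2) (Icc s T ×ˢ H))
    (hbdd : ∀ t ∈ Icc s T, ∀ x ∈ H, w t x ≤ C)
    (hinit : ∀ x ∈ H, w s x ≤ 0)
    (hpde : ∀ t ∈ Ioc s T, ∀ x ∈ H, w t x ≤ 0 ∨ (H ∈ 𝓝 x ∧
      ∃ (wt : ℝ) (P : Fin n → ℝ → ℝ) (q : Fin n → ℝ),
        HasDerivAt (fun r => w r x) wt t ∧
        (∀ j h, HasDerivAt (fun h => w t (x + h • (EuclideanSpace.single j 1 : E n))) (P j h) h) ∧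
        (∀ j, HasDerivAt (P j) (q j) 0) ∧
        wt ≤ ν * ∑ j, q j + B * ∑ j, |P j 0|)) :
    ∀ t ∈ Icc s T, ∀ x ∈ H, w t x ≤ 0 := by
  intro t₀ ht₀ x₀ hx₀
  by_contra! hpos
  obtain ⟨K, hK⟩ : ∃ K, K = 2 * n * ν + n * B + 1 := ⟨_, rfl⟩
  have hK0 : 0 < K := by rw [hK]; positivity
  set A : ℝ := Real.exp (K * (t₀ - s)) * (1 + ‖x₀‖ ^ 2) with hA
  have hA0 : 0 < A := by positivity
  obtain ⟨ε, hε⟩ : ∃ ε, ε = w t₀ x₀ / (2 * A) := ⟨_, rfl⟩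
  have hε0 : 0 < ε := by rw [hε]; positivity
  set ω : ℝ × E n → ℝ :=
    fun p => w p.1 p.2 - ε * (Real.exp (K * (p.1 - s)) * (1 + ‖p.2‖ ^ 2)) with hω
  have hω₀ : 0 < ω (t₀, x₀) := by
    have : ε * A = w t₀ x₀ / 2 := by rw [hε]; field_simp
    have h2 : ω (t₀, x₀) = w t₀ x₀ - ε * A := rfl
    rw [h2, this]; linarith
  have hωc : ContinuousOn ω (Icc s T ×ˢ H) := by
    apply hcont.sub
    fun_prop
  have hbig : ∀ p ∈ Icc s T ×ˢ H, 0 < ω p → ‖p.2‖ ≤ C / ε + 1 := by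
    rintro ⟨t, x⟩ ⟨ht, hx⟩ hp
    have h1 := hbdd t ht x hx
    have h2 : 1 ≤ Real.exp (K * (t - s)) :=
      Real.one_le_exp (mul_nonneg hK0.le (by linarith [ht.1]))
    have h3 : (1 + ‖x‖ ^ 2) ≤ Real.exp (K * (t - s)) * (1 + ‖x‖ ^ 2) :=
      le_mul_of_one_le_left (by positivity) h2
    have h4 : ε * (1 + ‖x‖ ^ 2) ≤ C := by
      have := mul_le_mul_of_nonneg_left h3 hε0.le
      simp only [hω] at hp
      linarith
    have h5 : 1 + ‖x‖ ^ 2 ≤ C / ε := by rw [le_div_iff₀ hε0]; linarith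
    simp only
    nlinarith [sq_nonneg (‖x‖ - 1)]
  have hcomp : IsCompact (Icc s T ×ˢ (H ∩ Metric.closedBall (0 : E n) (C / ε + 1))) :=
    isCompact_Icc.prod ((isCompact_closedBall _ _).inter_left hH)
  have hmem₀ : (t₀, x₀) ∈ Icc s T ×ˢ (H ∩ Metric.closedBall (0 : E n) (C / ε + 1)) :=
    ⟨ht₀, hx₀, by simpa using hbig (t₀, x₀) ⟨ht₀, hx₀⟩ hω₀⟩
  obtain ⟨⟨t, x⟩, ⟨ht, hx, -⟩, hmax⟩ := hcomp.exists_isMaxOn ⟨_, hmem₀⟩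
    (hωc.mono (prod_mono_right inter_subset_left))
  have hωpos : 0 < ω (t, x) := hω₀.trans_le (hmax hmem₀)
  have hmax' : ∀ p ∈ Icc s T ×ˢ H, ω p ≤ ω (t, x) := by
    intro p hp
    rcases le_or_gt (ω p) 0 with h | h
    · exact h.trans hωpos.le
    · exact hmax ⟨hp.1, hp.2, by simpa using hbig p hp h⟩
  simp only at ht hx
  have hwpos : 0 < w t x := by
    have : 0 ≤ ε * (Real.exp (K * (t - s)) * (1 + ‖x‖ ^ 2)) := by positivity
    simp only [hω] at hωpos
    linarith
  have hst : s < t := by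
    rcases ht.1.eq_or_lt with h | h
    · subst h; exact absurd (hinit x hx) (not_le.2 hwpos)
    · exact h
  rcases hpde t ⟨hst, ht.2⟩ x hx with h | ⟨hHx, wt, P, q, hwt, hP, hq, hle⟩
  · exact absurd h (not_le.2 hwpos)
  set e : ℝ := Real.exp (K * (t - s)) with he
  have he0 : 0 < e := Real.exp_pos _
  have htime : ε * (e * K * (1 + ‖x‖ ^ 2)) ≤ wt := by
    have h1 : HasDerivAt (fun r => ω (r, x)) (wt - ε * (e * K * (1 + ‖x‖ ^ 2))) t := by
      have : HasDerivAt (fun r => K * (r - s)) K t := by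
        simpa using ((hasDerivAt_id t).sub_const s).const_mul K
      exact hwt.sub ((this.exp.mul_const (1 + ‖x‖ ^ 2)).const_mul ε)
    have := h1.nonneg_of_isMaxOn_Icc hst fun r hr => hmax' (r, x) ⟨⟨hr.1, hr.2.trans ht.2⟩, hx⟩
    linarith
  have hspace : ∀ j, P j 0 = ε * (e * (2 * x j)) ∧ q j ≤ ε * (e * 2) := by
    intro j
    have hloc : IsLocalMax (fun h : ℝ => ω (t, x + h • (EuclideanSpace.single j 1 : E n))) 0 := by
      have hc : ContinuousAt (fun h : ℝ => x + h • (EuclideanSpace.single j 1 : E n)) 0 := by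
        fun_prop
      have hH' : H ∈ 𝓝 (x + (0 : ℝ) • (EuclideanSpace.single j 1 : E n)) := by simpa using hHx
      filter_upwards [hc.preimage_mem_nhds hH'] with h hh
      simpa using hmax' (t, x + h • (EuclideanSpace.single j 1 : E n)) ⟨ht, hh⟩
    have hd1 : ∀ h, HasDerivAt (fun h : ℝ => ω (t, x + h • (EuclideanSpace.single j 1 : E n)))
        (P j h - ε * (e * (2 * x j + 2 * h))) h := by
      intro h
      have hn : HasDerivAt (fun h : ℝ => 1 + ‖x + h • (EuclideanSpace.single j 1 : E n)‖ ^ 2)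
          (2 * x j + 2 * h) h := by
        simp_rw [norm_sq_add_smul_single]
        have h1 := (((hasDerivAt_id h).const_mul 2).mul_const (x j)).const_add (‖x‖ ^ 2)
        have h2 := (h1.add ((hasDerivAt_id h).pow 2)).const_add 1
        exact h2.congr_deriv (by simp)
      exact (hP j h).sub ((hn.const_mul e).const_mul ε)
    have hd2 : HasDerivAt (fun h => P j h - ε * (e * (2 * x j + 2 * h))) (q j - ε * (e * 2)) 0 := by
      refine (hq j).sub (HasDerivAt.const_mul ε (HasDerivAt.const_mul e ?_))
      simpa using ((hasDerivAt_id (0 : ℝ)).const_mul 2).const_add (2 * x j)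
    have h0 := hloc.hasDerivAt_eq_zero (hd1 0)
    have h2 := hloc.second_deriv_nonpos hd1 hd2
    simp only [mul_zero, add_zero] at h0
    exact ⟨by linarith, by linarith⟩
  have hsum1 : ∑ j, q j ≤ n * (ε * (e * 2)) := by
    calc ∑ j, q j ≤ ∑ _j : Fin n, ε * (e * 2) := Finset.sum_le_sum fun j _ => (hspace j).2
      _ = _ := by simp
  have hsum2 : ∑ j, |P j 0| ≤ n * (ε * (e * (1 + ‖x‖ ^ 2))) := by
    calc ∑ j, |P j 0| ≤ ∑ _j : Fin n, ε * (e * (1 + ‖x‖ ^ 2)) := by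
          refine Finset.sum_le_sum fun j _ => ?_
          have hj : |x j| ≤ ‖x‖ := by simpa using PiLp.norm_apply_le x j
          rw [(hspace j).1, abs_mul, abs_mul, abs_mul, abs_of_pos hε0, abs_of_pos he0, abs_two]
          gcongr
          nlinarith [sq_nonneg (‖x‖ - 1)]
      _ = _ := by simp
  have hfin : ε * (e * K * (1 + ‖x‖ ^ 2)) ≤
      ν * (n * (ε * (e * 2))) + B * (n * (ε * (e * (1 + ‖x‖ ^ 2)))) :=
    htime.trans (hle.trans (by gcongr))
  have hεe : 0 < ε * e := by positivity
  have : K * (1 + ‖x‖ ^ 2) ≤ 2 * n * ν + n * B * (1 + ‖x‖ ^ 2) := by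
    refine le_of_mul_le_mul_left ?_ hεe
    linarith
  have hnν : 0 ≤ n * ν := by positivity
  rw [hK] at this
  nlinarith [sq_nonneg ‖x‖, mul_nonneg hnν (sq_nonneg ‖x‖)]

theorem hasDerivAt_slice {n : ℕ} {g : E n → ℝ} (hg : Differentiable ℝ g) (y : E n) (j : Fin n)
    (a h : ℝ) :
    HasDerivAt (fun h : ℝ => g (y + (a * h) • (EuclideanSpace.single j 1 : E n)))
      (a * pd g j (y + (a * h) • (EuclideanSpace.single j 1 : E n))) h := by
  have h1 : HasDerivAt (fun h : ℝ => y + (a * h) • (EuclideanSpace.single j 1 : E n))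
      (a • (EuclideanSpace.single j 1 : E n)) h := by
    have := ((hasDerivAt_id h).const_mul a).smul_const (EuclideanSpace.single j 1 : E n)
    simpa using this.const_add y
  have h2 := (hg (y + (a * h) • (EuclideanSpace.single j 1 : E n))).hasFDerivAt.comp_hasDerivAt h h1
  exact h2.congr_deriv (by simp [pd])

theorem hasDerivAt_slice_one {n : ℕ} {g : E n → ℝ} (hg : Differentiable ℝ g) (y : E n) (j : Fin n)
    (h : ℝ) :
    HasDerivAt (fun h : ℝ => g (y + h • (EuclideanSpace.single j 1 : E n)))
      (pd g j (y + h • (EuclideanSpace.single j 1 : E n))) h := by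
  simpa using hasDerivAt_slice hg y j 1 h

/-- Reflection of `x` through the hyperplane `{xᵢ = c}`. -/
def hyperplaneReflection {n : ℕ} (i : Fin n) (c : ℝ) (x : E n) : E n :=
  x + (2 * (c - x i)) • (EuclideanSpace.single i 1 : E n)

theorem hyperplaneReflection_add_smul {n : ℕ} (i j : Fin n) (c : ℝ) (x : E n) (h : ℝ) :
    hyperplaneReflection i c (x + h • (EuclideanSpace.single j 1 : E n)) =
      hyperplaneReflection i c x +
        ((1 - 2 * (if j = i then 1 else 0)) * h) • (EuclideanSpace.single j 1 : E n) := by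
  unfold hyperplaneReflection
  by_cases hij : j = i
  · subst hij
    simp
    module
  · have : i ≠ j := fun h => hij h.symm
    simp [hij, this]
    module

theorem continuous_hyperplaneReflection {n : ℕ} (i : Fin n) (c : ℝ) :
    Continuous (hyperplaneReflection (n := n) i c) := by
  unfold hyperplaneReflection
  fun_prop

/-- One-sided estimate of a partial derivative at the final time for a bounded solution of
`∂U/∂t = νΔU + g`, in terms of the increments at the initial time. -/
theorem pd_le_of_heat_equation {n : ℕ} {ν M N s T l α β : ℝ} (hsT : s < T)
    (hN : 0 ≤ N) (hα : 0 ≤ α) (hβ : 0 ≤ β) (hl : 0 < l) (hlν : ν * l ^ 2 * (T - s) = 1)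
    {U g : ℝ → E n → ℝ} {i : Fin n}
    (hcont : ContinuousOn (fun p : ℝ × E n => U p.1 p.2) (Icc s T ×ˢ univ))
    (hbdd : ∀ t ∈ Icc s T, ∀ x, |U t x| ≤ M)
    (hdiff : ∀ t ∈ Icc s T, Differentiable ℝ (U t) ∧ ∀ j, Differentiable ℝ (pd (U t) j))
    (heq : ∀ t ∈ Ioc s T, ∀ x, HasDerivAt (fun r => U r x)
      (ν * ∑ j, pd (pd (U t) j) j x + g t x) t)
    (hg : ∀ t ∈ Ioc s T, ∀ x, |g t x| ≤ N)
    (hinit : ∀ x h, 0 ≤ h →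
      U s (x + h • (EuclideanSpace.single i 1 : E n)) - U s x ≤ α * h + β) (p : E n) :
    pd (U T) i p ≤ α + Real.exp 1 * l * (N * (T - s) + β / 2) := by
  have hτ : 0 < T - s := sub_pos.2 hsT
  have hν : 0 < ν := by
    by_contra! h
    nlinarith [mul_nonneg (sq_nonneg l) hτ.le]
  set c : ℝ := p i with hc
  set τ : ℝ := T - s with hτdef
  obtain ⟨κ, hκ⟩ : ∃ κ, κ = 2 * N * τ + β := ⟨_, rfl⟩
  have hκ0 : 0 ≤ κ := by rw [hκ]; positivity
  set H : Set (E n) := {x | c ≤ x i} with hHdef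
  set w : ℝ → E n → ℝ := fun t x => U t x - U t (hyperplaneReflection i c x) -
    (2 * α * (x i - c) + β * ((T - t) / τ) +
      κ * Real.exp ((t - s) / τ) * (1 - Real.exp (-(l * (x i - c))))) with hw
  have hexp : ∀ x ∈ H, 0 ≤ 1 - Real.exp (-(l * (x i - c))) := by
    intro x hx
    have : 0 ≤ l * (x i - c) := mul_nonneg hl.le (sub_nonneg.2 hx)
    linarith [Real.exp_le_one_iff.2 (neg_nonpos.2 this)]
  have hbar : ∀ t ∈ Icc s T, ∀ x ∈ H, 0 ≤ 2 * α * (x i - c) + β * ((T - t) / τ) +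
      κ * Real.exp ((t - s) / τ) * (1 - Real.exp (-(l * (x i - c)))) := by
    intro t ht x hx
    have h1 := hexp x hx
    have h2 : 0 ≤ x i - c := sub_nonneg.2 hx
    have h3 : 0 ≤ T - t := sub_nonneg.2 ht.2
    positivity
  have key : ∀ t ∈ Icc s T, ∀ x ∈ H, w t x ≤ 0 := by
    refine parabolic_max_principle (ν := ν) (B := 0) (C := 2 * M) hν.le le_rfl ?_ ?_ ?_ ?_ ?_
    · exact isClosed_le continuous_const (by fun_prop)
    · have h1 : ContinuousOn (fun p : ℝ × E n => U p.1 p.2) (Icc s T ×ˢ H) :=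
        hcont.mono (prod_mono_right (subset_univ _))
      have h2 : ContinuousOn (fun p : ℝ × E n => U p.1 (hyperplaneReflection i c p.2))
          (Icc s T ×ˢ H) := by
        refine hcont.comp (f := fun p : ℝ × E n => (p.1, hyperplaneReflection i c p.2)) ?_ ?_
        · exact (continuous_fst.prodMk
            ((continuous_hyperplaneReflection i c).comp continuous_snd)).continuousOn
        · exact fun p hp => ⟨hp.1, mem_univ _⟩
      refine (h1.sub h2).sub (Continuous.continuousOn ?_)
      fun_prop
    · intro t ht x hx
      have h1 := abs_le.1 (hbdd t ht x)
      have h2 := abs_le.1 (hbdd t ht (hyperplaneReflection i c x))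
      have h3 := hbar t ht x hx
      simp only [hw]
      linarith
    · intro x hx
      have h2 : 0 ≤ x i - c := sub_nonneg.2 hx
      have h1 := hinit (hyperplaneReflection i c x) (2 * (x i - c)) (by positivity)
      have h3 : hyperplaneReflection i c x +
          (2 * (x i - c)) • (EuclideanSpace.single i 1 : E n) = x := by
        unfold hyperplaneReflection
        module
      rw [h3] at h1
      have h4 : (T - s) / τ = 1 := div_self hτ.ne'
      have h5 : 0 ≤ κ * Real.exp ((s - s) / τ) * (1 - Real.exp (-(l * (x i - c)))) := by
        have := hexp x hx
        positivity
      simp only [hw, h4]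
      linarith
    · intro t ht x hx
      have htI : t ∈ Icc s T := Ioc_subset_Icc_self ht
      rcases (show c ≤ x i from hx).eq_or_lt with hxc | hxc
      · left
        have : hyperplaneReflection i c x = x := by simp [hyperplaneReflection, hxc]
        have h3 := hbar t htI x hx
        simp only [hw, this]
        linarith
      right
      refine ⟨?_, ?_⟩
      · have : ContinuousAt (fun x : E n => x i) x := by fun_prop
        exact (this.eventually (lt_mem_nhds hxc)).mono fun y hy => le_of_lt hy
      set y := hyperplaneReflection i c x with hy
      set Λ := Real.exp ((t - s) / τ) with hΛ
      have hΛ1 : 1 ≤ Λ := Real.one_le_exp (div_nonneg (by linarith [ht.1]) hτ.le)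
      let d : Fin n → ℝ := fun j => if j = i then 1 else 0
      have hdi : ∀ j, d j * d j = d j := fun j => by simp [d]
      have hcoord : ∀ (j : Fin n) (h : ℝ),
          (x + h • (EuclideanSpace.single j 1 : E n)) i = x i + d j * h := by
        intro j h
        by_cases hij : j = i
        · subst hij; simp [d]
        · have : i ≠ j := fun h => hij h.symm
          simp [d, hij, this]
      refine ⟨(ν * ∑ j, pd (pd (U t) j) j x + g t x) - (ν * ∑ j, pd (pd (U t) j) j y + g t y) -
          (β * (-1 / τ) + κ * (Λ * (1 / τ)) * (1 - Real.exp (-(l * (x i - c))))),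
        fun j h => pd (U t) j (x + h • (EuclideanSpace.single j 1 : E n)) -
          (1 - 2 * d j) * pd (U t) j (y + ((1 - 2 * d j) * h) • (EuclideanSpace.single j 1 : E n)) -
          (2 * α * d j + κ * Λ * (l * d j * Real.exp (-(l * (x i + d j * h - c))))),
        fun j => pd (pd (U t) j) j x - pd (pd (U t) j) j y +
          κ * Λ * (l ^ 2 * d j * Real.exp (-(l * (x i - c)))), ?_, ?_, ?_, ?_⟩
      · have h1 : HasDerivAt (fun r => (T - r) / τ) (-1 / τ) t :=
          ((hasDerivAt_id t).const_sub T).div_const τ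
        have h2 : HasDerivAt (fun r => (r - s) / τ) (1 / τ) t :=
          ((hasDerivAt_id t).sub_const s).div_const τ
        exact ((heq t ht x).sub (heq t ht y)).sub
          (((h1.const_mul β).const_add (2 * α * (x i - c))).add
            ((h2.exp.const_mul κ).mul_const (1 - Real.exp (-(l * (x i - c))))))
      · intro j h
        simp only [hw, hcoord, hyperplaneReflection_add_smul]
        have h1 := hasDerivAt_slice_one (hdiff t htI).1 x j h
        have h2 := hasDerivAt_slice (hdiff t htI).1 y j (1 - 2 * d j) h
        have h3 : HasDerivAt (fun h => x i + d j * h - c) (d j) h := by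
          simpa using (((hasDerivAt_id h).const_mul (d j)).const_add (x i)).sub_const c
        have h4 := ((h3.const_mul (2 * α)).add_const (β * ((T - t) / τ))).add
          ((((h3.const_mul l).neg.exp).const_sub 1).const_mul (κ * Λ))
        refine ((h1.sub h2).sub h4).congr_deriv ?_
        simp only [Pi.neg_apply]
        ring
      · intro j
        have h1 := hasDerivAt_slice_one ((hdiff t htI).2 j) x j 0
        have h2 := (hasDerivAt_slice ((hdiff t htI).2 j) y j (1 - 2 * d j) 0).const_mul (1 - 2 * d j)
        have h3 : HasDerivAt (fun h => x i + d j * h - c) (d j) 0 := by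
          simpa using (((hasDerivAt_id (0 : ℝ)).const_mul (d j)).const_add (x i)).sub_const c
        have h4 := ((((h3.const_mul l).neg.exp).const_mul (l * d j)).const_mul (κ * Λ)).const_add
          (2 * α * d j)
        refine ((h1.sub h2).sub h4).congr_deriv ?_
        simp only [Pi.neg_apply, mul_zero, zero_smul, add_zero]
        linear_combination (-4 * pd (pd (U t) j) j y + κ * Λ * l ^ 2 *
          Real.exp (-(l * (x i - c)))) * hdi j
      · have hsum : ∑ j, (pd (pd (U t) j) j x - pd (pd (U t) j) j y +
            κ * Λ * (l ^ 2 * d j * Real.exp (-(l * (x i - c))))) =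
            ∑ j, pd (pd (U t) j) j x - ∑ j, pd (pd (U t) j) j y +
            κ * Λ * (l ^ 2 * Real.exp (-(l * (x i - c)))) := by
          rw [Finset.sum_add_distrib, Finset.sum_sub_distrib]
          simp [d]
        rw [hsum, zero_mul, add_zero]
        have hg1 := abs_le.1 (hg t ht x)
        have hg2 := abs_le.1 (hg t ht y)
        have hl2 : ν * l ^ 2 = 1 / τ := by rw [eq_div_iff hτ.ne']; exact hlν
        have hκτ : κ * (1 / τ) = 2 * N + β * (1 / τ) := by rw [hκ]; field_simp
        have hΛκ : κ * (1 / τ) ≤ κ * (1 / τ) * Λ := le_mul_of_one_le_right (by positivity) hΛ1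
        have e1 : ν * (κ * Λ * (l ^ 2 * Real.exp (-(l * (x i - c))))) =
            κ * (1 / τ) * Λ * Real.exp (-(l * (x i - c))) := by
          rw [← hl2]; ring
        rw [mul_add, e1, mul_sub]
        have e2 : β * (-1 / τ) = - (β * (1 / τ)) := by ring
        rw [e2]
        linarith
  have hslope : ∀ h : ℝ, 0 ≤ h →
      U T (p + h • (EuclideanSpace.single i 1 : E n)) -
        U T (p + (-1 * h) • (EuclideanSpace.single i 1 : E n)) ≤
        (2 * α + κ * Real.exp 1 * l) * h := by
    intro h hh
    have hi : (p + h • (EuclideanSpace.single i 1 : E n)) i = c + h := by simp [hc]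
    have h1 := key T (right_mem_Icc.2 hsT.le) (p + h • (EuclideanSpace.single i 1 : E n))
      (by simp only [hHdef, mem_ofPred_eq, hi]; linarith)
    have h2 : hyperplaneReflection i c (p + h • (EuclideanSpace.single i 1 : E n)) =
        p + (-1 * h) • (EuclideanSpace.single i 1 : E n) := by
      unfold hyperplaneReflection
      rw [hi]
      module
    simp only [hw, hi, h2] at h1
    have h3 : (T - s) / τ = 1 := div_self hτ.ne'
    rw [h3, sub_self, zero_div, mul_zero, add_sub_cancel_left] at h1
    have h4 : 1 - Real.exp (-(l * h)) ≤ l * h := by linarith [Real.add_one_le_exp (-(l * h))]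
    have h5 := mul_le_mul_of_nonneg_left h4 (mul_nonneg hκ0 (Real.exp_pos 1).le)
    linarith
  have hdT := (hdiff T (right_mem_Icc.2 hsT.le)).1
  have hder := ((hasDerivAt_slice_one hdT p i 0).sub (hasDerivAt_slice hdT p i (-1) 0))
  have hfin : 2 * pd (U T) i p ≤ 2 * α + κ * Real.exp 1 * l := by
    have h1 := hder.hasDerivWithinAt (s := Ioi 0)
    rw [hasDerivWithinAt_iff_tendsto_slope' (by simp)] at h1
    have h2 := le_of_tendsto h1 (b := 2 * α + κ * Real.exp 1 * l) (by
      filter_upwards [self_mem_nhdsWithin] with h hh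
      have hh' : 0 < h := hh
      rw [slope_def_field, div_le_iff₀ (by linarith)]
      simpa using hslope h hh'.le)
    simp only [mul_zero, zero_smul, add_zero] at h2
    linarith
  rw [hκ] at hfin
  linarith

theorem pd_const_mul {n : ℕ} {g : E n → ℝ} (hg : Differentiable ℝ g) (ε : ℝ) (j : Fin n) :
    pd (fun x => ε * g x) j = fun x => ε * pd g j x := by
  funext x
  simp [pd, fderiv_const_mul (hg x)]

theorem abs_sub_le_of_abs_pd_le {n : ℕ} {g : E n → ℝ} {K : ℝ} {j : Fin n}
    (hg : Differentiable ℝ g) (hK : ∀ x, |pd g j x| ≤ K) (x : E n) (h : ℝ) :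
    |g (x + h • (EuclideanSpace.single j 1 : E n)) - g x| ≤ K * |h| := by
  have := convex_univ.norm_image_sub_le_of_norm_hasDerivWithin_le
    (f := fun h : ℝ => g (x + h • (EuclideanSpace.single j 1 : E n)))
    (fun h _ => (hasDerivAt_slice_one hg x j h).hasDerivWithinAt)
    (fun h _ => hK _) (mem_univ 0) (mem_univ h)
  simpa using this

theorem abs_pd_le_of_abs_sub_le {n : ℕ} {g : E n → ℝ} {K : ℝ} {j : Fin n}
    (hg : Differentiable ℝ g) (hK : 0 ≤ K) (x : E n)
    (hlip : ∀ h : ℝ, |g (x + h • (EuclideanSpace.single j 1 : E n)) - g x| ≤ K * |h|) :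
    |pd g j x| ≤ K := by
  have h1 := hasDerivAt_slice_one hg x j 0
  have h2 := h1.le_of_lip' hK (Eventually.of_forall fun h => by simpa using hlip h)
  simpa using h2

theorem sup0_le {n : ℕ} {w : ℝ → E n → ℝ} {K : ℝ}
    (h : ∀ t ∈ Icc (0 : ℝ) 1, ∀ x, |w t x| ≤ K) : sup0 1 w ≤ K := by
  have : Nonempty (Icc (0 : ℝ) 1) := ⟨⟨0, by simp⟩⟩
  exact ciSup_le fun t => ciSup_le fun x => h t.1 t.2 x

theorem abs_le_sup0 {n : ℕ} {w : ℝ → E n → ℝ} {M : ℝ}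
    (h : ∀ t ∈ Icc (0 : ℝ) 1, ∀ x, |w t x| ≤ M) {t : ℝ} (ht : t ∈ Icc (0 : ℝ) 1) (x : E n) :
    |w t x| ≤ sup0 1 w := by
  have h1 : |w t x| ≤ ⨆ x, |w t x| :=
    le_ciSup (f := fun x => |w t x|) ⟨M, by rintro _ ⟨y, rfl⟩; exact h t ht y⟩ x
  refine h1.trans (le_ciSup (f := fun t : Icc (0 : ℝ) 1 => ⨆ x, |w t.1 x|)
    ⟨M, ?_⟩ (⟨t, ht⟩ : Icc (0 : ℝ) 1))
  rintro _ ⟨r, rfl⟩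
  exact ciSup_le fun y => h r.1 r.2 y

theorem abs_le_supS {n : ℕ} {f : E n → ℝ} {M : ℝ} (h : ∀ x, |f x| ≤ M) (x : E n) :
    |f x| ≤ supS f :=
  le_ciSup (f := fun x => |f x|) ⟨M, by rintro _ ⟨y, rfl⟩; exact h y⟩ x

/-- `u` is a classical solution of `∂u/∂t = νΔu + g` on `(0,1) × ℝⁿ`, continuous on
`[0,1] × ℝⁿ` and twice differentiable in space. -/
structure IsHeatSolution {n : ℕ} (ν : ℝ) (g u : ℝ → E n → ℝ) : Prop where
  cont : ContinuousOn (fun p : ℝ × E n => u p.1 p.2) (Icc (0 : ℝ) 1 ×ˢ univ)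
  diff : ∀ t ∈ Icc (0 : ℝ) 1, Differentiable ℝ (u t)
  diff_pd : ∀ t ∈ Icc (0 : ℝ) 1, ∀ j, Differentiable ℝ (pd (u t) j)
  eq : ∀ t ∈ Ioo (0 : ℝ) 1, ∀ x, HasDerivAt (fun r => u r x)
    (ν * ∑ j, pd (pd (u t) j) j x + g t x) t

namespace IsHeatSolution

variable {n : ℕ} {ν : ℝ} {g u : ℝ → E n → ℝ}

theorem const_mul (hu : IsHeatSolution ν g u) (ε : ℝ) :
    IsHeatSolution ν (fun t x => ε * g t x) (fun t x => ε * u t x) where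
  cont := continuousOn_const.mul hu.cont
  diff t ht := (hu.diff t ht).const_mul ε
  diff_pd t ht j := by
    rw [pd_const_mul (hu.diff t ht)]
    exact (hu.diff_pd t ht j).const_mul ε
  eq t ht x := by
    have htI := Ioo_subset_Icc_self ht
    refine ((hu.eq t ht x).const_mul ε).congr_deriv ?_
    simp_rw [pd_const_mul (hu.diff t htI), pd_const_mul (hu.diff_pd t htI _), ← Finset.mul_sum]
    ring

theorem tendsto_one (hu : IsHeatSolution ν g u) (x : E n) :
    Tendsto (fun t => u t x) (𝓝[<] 1) (𝓝 (u 1 x)) := by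
  have h1 : ContinuousWithinAt (fun p : ℝ × E n => u p.1 p.2) (Icc (0 : ℝ) 1 ×ˢ univ) (1, x) :=
    hu.cont (1, x) ⟨by simp, mem_univ _⟩
  have h2 : ContinuousWithinAt (fun t => u t x) (Icc (0 : ℝ) 1) 1 :=
    h1.comp (f := fun t : ℝ => (t, x)) (by fun_prop) fun t ht => ⟨ht, mem_univ _⟩
  have h3 : 𝓝[<] (1 : ℝ) ≤ 𝓝[Icc (0 : ℝ) 1] 1 := by
    rw [← nhdsWithin_Ioo_eq_nhdsLT (zero_lt_one (α := ℝ))]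
    exact nhdsWithin_mono _ Ioo_subset_Icc_self
  exact h2.tendsto.mono_left h3

/-- A bounded solution whose source is controlled by its gradient is bounded by its initial
values. -/
theorem le_of_initial_le (hu : IsHeatSolution ν g u) {B F M : ℝ} (hν : 0 ≤ ν) (hB : 0 ≤ B)
    (hM : ∀ t ∈ Icc (0 : ℝ) 1, ∀ x, |u t x| ≤ M)
    (hg : ∀ t ∈ Ioo (0 : ℝ) 1, ∀ x, g t x ≤ B * ∑ j, |pd (u t) j x|)
    (hF : ∀ x, u 0 x ≤ F) {t : ℝ} (ht : t ∈ Icc (0 : ℝ) 1) (x : E n) : u t x ≤ F := by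
  have main : ∀ T ∈ Ioo (0 : ℝ) 1, ∀ x, u T x ≤ F := by
    intro T hT x
    have hsub : Icc 0 T ⊆ Icc (0 : ℝ) 1 := Icc_subset_Icc_right hT.2.le
    have key := parabolic_max_principle (w := fun t x => u t x - F) (s := 0) (T := T)
      (C := M - F) hν hB isClosed_univ
      ((hu.cont.mono (prod_mono_left hsub)).sub continuousOn_const)
      (fun t ht x _ => sub_le_sub_right (abs_le.1 (hM t (hsub ht) x)).2 F)
      (fun x _ => sub_nonpos.2 (hF x))
      (fun t ht x _ => by
        have htI : t ∈ Icc (0 : ℝ) 1 := hsub (Ioc_subset_Icc_self ht)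
        have htO : t ∈ Ioo (0 : ℝ) 1 := ⟨ht.1, ht.2.trans_lt hT.2⟩
        refine Or.inr ⟨univ_mem, _,
          fun j h => pd (u t) j (x + h • (EuclideanSpace.single j 1 : E n)),
          fun j => pd (pd (u t) j) j x, (hu.eq t htO x).sub_const F, fun j h => ?_, fun j => ?_, ?_⟩
        · exact (hasDerivAt_slice_one (hu.diff t htI) x j h).sub_const F
        · simpa using hasDerivAt_slice_one (hu.diff_pd t htI j) x j 0
        · simpa using hg t htO x)
    exact sub_nonpos.1 (key T (right_mem_Icc.2 hT.1.le) x (mem_univ x))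
  rcases ht.1.eq_or_lt with h0 | h0
  · exact h0 ▸ hF x
  rcases ht.2.eq_or_lt with h1 | h1
  · rw [h1]
    refine le_of_tendsto (hu.tendsto_one x) ?_
    filter_upwards [Ioo_mem_nhdsLT (zero_lt_one (α := ℝ))] with r hr
    exact main r hr x
  · exact main t ⟨h0, h1⟩ x

theorem abs_le_of_initial_abs_le (hu : IsHeatSolution ν g u) {B F M : ℝ} (hν : 0 ≤ ν)
    (hB : 0 ≤ B) (hM : ∀ t ∈ Icc (0 : ℝ) 1, ∀ x, |u t x| ≤ M)
    (hg : ∀ t ∈ Ioo (0 : ℝ) 1, ∀ x, |g t x| ≤ B * ∑ j, |pd (u t) j x|)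
    (hF : ∀ x, |u 0 x| ≤ F) {t : ℝ} (ht : t ∈ Icc (0 : ℝ) 1) (x : E n) : |u t x| ≤ F := by
  refine abs_le.2 ⟨?_, hu.le_of_initial_le hν hB hM (fun t ht x => (abs_le.1 (hg t ht x)).2)
    (fun x => (abs_le.1 (hF x)).2) ht x⟩
  have := (hu.const_mul (-1)).le_of_initial_le (F := F) hν hB (by simpa using hM)
    (fun t ht x => by
      simp_rw [pd_const_mul (hu.diff t (Ioo_subset_Icc_self ht))]
      have := (abs_le.1 (hg t ht x)).1
      simp only [neg_mul, one_mul, abs_neg]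
      linarith)
    (fun x => by have := (abs_le.1 (hF x)).1; linarith) ht x
  linarith

theorem abs_pd_le (hu : IsHeatSolution ν g u) {F N s T l α β : ℝ} (hs : 0 ≤ s) (hsT : s < T)
    (hT : T < 1) (hN : 0 ≤ N) (hα : 0 ≤ α) (hβ : 0 ≤ β) (hl : 0 < l)
    (hlν : ν * l ^ 2 * (T - s) = 1) (hF : ∀ t ∈ Icc (0 : ℝ) 1, ∀ x, |u t x| ≤ F)
    (hg : ∀ t ∈ Ioo (0 : ℝ) 1, ∀ x, |g t x| ≤ N) {i : Fin n}
    (hinit : ∀ x h, 0 ≤ h →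
      |u s (x + h • (EuclideanSpace.single i 1 : E n)) - u s x| ≤ α * h + β) (p : E n) :
    |pd (u T) i p| ≤ α + Real.exp 1 * l * (N * (T - s) + β / 2) := by
  have hIcc : Icc s T ⊆ Icc (0 : ℝ) 1 := Icc_subset_Icc hs hT.le
  have hIoc : Ioc s T ⊆ Ioo (0 : ℝ) 1 := fun t ht => ⟨hs.trans_lt ht.1, ht.2.trans_lt hT⟩
  have signed : ∀ ε : ℝ, |ε| = 1 →
      ε * pd (u T) i p ≤ α + Real.exp 1 * l * (N * (T - s) + β / 2) := by
    intro ε hε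
    have hv := hu.const_mul ε
    have := pd_le_of_heat_equation (U := fun t x => ε * u t x) (i := i) (M := F) hsT hN hα hβ hl hlν
      (hv.cont.mono (prod_mono_left hIcc))
      (fun t ht x => by rw [abs_mul, hε, one_mul]; exact hF t (hIcc ht) x)
      (fun t ht => ⟨hv.diff t (hIcc ht), hv.diff_pd t (hIcc ht)⟩)
      (fun t ht x => hv.eq t (hIoc ht) x)
      (fun t ht x => by rw [abs_mul, hε, one_mul]; exact hg t (hIoc ht) x)
      (fun x h hh => by
        rw [← mul_sub]
        refine (le_abs_self _).trans ?_
        rw [abs_mul, hε, one_mul]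
        exact hinit x h hh) p
    rwa [pd_const_mul (hu.diff T ⟨hs.trans hsT.le, hT.le⟩)] at this
  have h1 := signed 1 (by simp)
  have h2 := signed (-1) (by simp)
  exact abs_le.2 ⟨by linarith, by linarith⟩

/-- Interior gradient estimate with a free time scale `q ^ 2`: for `t ≤ q ^ 2` the initial
gradient is used, for later times only the supremum norm. -/
theorem abs_pd_le_of_scale (hu : IsHeatSolution ν g u) {F N L q : ℝ} (hν : 0 < ν) (hN : 0 ≤ N)
    (hL : 0 ≤ L) (hq : 0 < q) (hF : ∀ t ∈ Icc (0 : ℝ) 1, ∀ x, |u t x| ≤ F)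
    (hg : ∀ t ∈ Ioo (0 : ℝ) 1, ∀ x, |g t x| ≤ N) {i : Fin n}
    (hinit : ∀ x, |pd (u 0) i x| ≤ L) {t : ℝ} (ht : t ∈ Ico (0 : ℝ) 1) (p : E n) :
    |pd (u t) i p| ≤ L + Real.exp 1 / √ν * N * q +
      if t ≤ q ^ 2 then 0 else Real.exp 1 / √ν * F / q := by
  have hsν : 0 < √ν := Real.sqrt_pos.2 hν
  have hsν2 : √ν ^ 2 = ν := Real.sq_sqrt hν.le
  have he := Real.exp_pos 1
  split_ifs with htq
  · rcases ht.1.eq_or_lt with h0 | h0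
    · rw [← h0]
      have : 0 ≤ Real.exp 1 / √ν * N * q := by positivity
      linarith [hinit p]
    · have hst : 0 < √t := Real.sqrt_pos.2 h0
      have hst2 : √t ^ 2 = t := Real.sq_sqrt h0.le
      have key := hu.abs_pd_le (l := 1 / (√ν * √t)) (α := L) (β := 0) le_rfl h0 ht.2 hN hL le_rfl
        (by positivity) (by
          rw [sub_zero, div_pow, mul_pow, hsν2, hst2]
          field_simp) hF hg
        (fun x h hh => by
          simpa [abs_of_nonneg hh] using
            abs_sub_le_of_abs_pd_le (hu.diff 0 (by simp)) hinit x h) p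
      have e1 : Real.exp 1 * (1 / (√ν * √t)) * (N * (t - 0) + 0 / 2) =
          Real.exp 1 / √ν * N * √t := by
        nth_rewrite 2 [← hst2]
        field_simp
        ring
      have h3 : √t ≤ q := Real.sqrt_le_iff.2 ⟨hq.le, htq⟩
      have h4 : Real.exp 1 / √ν * N * √t ≤ Real.exp 1 / √ν * N * q := by gcongr
      linarith
  · push Not at htq
    have hs0 : 0 ≤ t - q ^ 2 := by linarith
    have hst : t - q ^ 2 < t := by linarith [pow_pos hq 2]
    have hF0 : 0 ≤ F := (abs_nonneg _).trans (hF 0 (by simp) p)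
    have key := hu.abs_pd_le (l := 1 / (√ν * q)) (α := 0) (β := 2 * F) hs0 hst ht.2 hN le_rfl
      (by positivity) (by positivity) (by
        rw [sub_sub_cancel, div_pow, mul_pow, hsν2]
        field_simp) hF hg
      (fun x h hh => by
        have hm : t - q ^ 2 ∈ Icc (0 : ℝ) 1 := ⟨hs0, by linarith [ht.2]⟩
        have h1 := abs_le.1 (hF _ hm x)
        have h2 := abs_le.1 (hF _ hm (x + h • (EuclideanSpace.single i 1 : E n)))
        exact abs_le.2 ⟨by linarith, by linarith⟩) p
    have e1 : Real.exp 1 * (1 / (√ν * q)) * (N * (t - (t - q ^ 2)) + 2 * F / 2) =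
        Real.exp 1 / √ν * N * q + Real.exp 1 / √ν * F / q := by
      field_simp
      ring
    linarith

theorem abs_pd_le_of_abs_pd_le_Ico (hu : IsHeatSolution ν g u) {K : ℝ} {i : Fin n}
    (h : ∀ t ∈ Ico (0 : ℝ) 1, ∀ x, |pd (u t) i x| ≤ K) {t : ℝ} (ht : t ∈ Icc (0 : ℝ) 1)
    (x : E n) : |pd (u t) i x| ≤ K := by
  rcases ht.2.eq_or_lt with h1 | h1
  · have hK : 0 ≤ K := (abs_nonneg _).trans (h 0 (by simp) x)
    rw [h1]
    refine abs_pd_le_of_abs_sub_le (hu.diff 1 (by simp)) hK x fun r => ?_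
    refine le_of_tendsto ((hu.tendsto_one _).sub (hu.tendsto_one x)).abs ?_
    filter_upwards [Ioo_mem_nhdsLT (zero_lt_one (α := ℝ))] with s hs
    exact abs_sub_le_of_abs_pd_le (hu.diff s (Ioo_subset_Icc_self hs))
      (h s (Ioo_subset_Ico_self hs)) x r
  · exact h t ⟨ht.1, h1⟩ x

end IsHeatSolution

/-- Part (ii) of the lemma: there is `C₁* > 0`, depending only on `n` and `ν`, such
that any bounded classical solution `u` (with bounded first spatial derivatives) of
`∂u/∂t = νΔu + b·∇u` on `[0,1]×ℝⁿ`, `u(0,·)=f`, with `|b|₀ ≤ C_b⁰`, `|b|_{0,1} ≤ C_b¹`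
and `|f|₁ ≤ C_f¹`, satisfies `|u|_{0,1} ≤ (1 + C_b⁰ C₁*)·|f|₁`. -/
theorem statement_3 (n : ℕ) (hn : 1 ≤ n) (ν : ℝ) (hν : 0 < ν) :
    ∃ C₁ : ℝ, 0 < C₁ ∧
    ∀ (b : Fin n → ℝ → E n → ℝ) (f : E n → ℝ) (u : ℝ → E n → ℝ) (Cb0 Cb1 Cf : ℝ),
      -- b bounded with bounded continuous first-order spatial derivatives
      (∃ M : ℝ, ∀ i, ∀ t ∈ Icc (0:ℝ) 1, ∀ x, |b i t x| ≤ M ∧ ∀ j, |pd (b i t) j x| ≤ M) →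
      (∀ i, ∀ t ∈ Icc (0:ℝ) 1, Differentiable ℝ (b i t) ∧ ∀ j, Continuous (pd (b i t) j)) →
      -- b parabolically Hölder continuous
      (∃ δ ∈ Ioo (0:ℝ) 1, ∃ C : ℝ, ∀ i, ∀ t₁ ∈ Icc (0:ℝ) 1, ∀ t₂ ∈ Icc (0:ℝ) 1, ∀ x₁ x₂,
        |b i t₁ x₁ - b i t₂ x₂| ≤ C * (Real.sqrt |t₁ - t₂| + ‖x₁ - x₂‖) ^ δ) →
      (∀ i, sup0 1 (b i) ≤ Cb0) →
      (∀ i, norm01 1 (b i) ≤ Cb1) →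
      -- f continuously differentiable with |f|₁ ≤ C_f¹ < ∞
      ContDiff ℝ 1 f →
      (∃ M : ℝ, ∀ x, |f x| ≤ M ∧ ∀ j, |pd f j x| ≤ M) →
      norm1f f ≤ Cf →
      -- u a bounded classical solution with bounded first spatial derivatives
      (∃ M : ℝ, ∀ t ∈ Icc (0:ℝ) 1, ∀ x, |u t x| ≤ M ∧ ∀ j, |pd (u t) j x| ≤ M) →
      ContinuousOn (fun p : ℝ × E n => u p.1 p.2) (Icc (0:ℝ) 1 ×ˢ univ) →
      (∀ x, ∀ t ∈ Ioo (0:ℝ) 1, DifferentiableAt ℝ (fun s => u s x) t) →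
      (∀ t ∈ Icc (0:ℝ) 1, Differentiable ℝ (u t) ∧ ∀ j,
        Differentiable ℝ (pd (u t) j) ∧ Continuous (pd (u t) j) ∧
        ∀ k, Continuous (pd (pd (u t) j) k)) →
      (∀ x, ∀ t ∈ Ioo (0:ℝ) 1, deriv (fun s => u s x) t =
        ν * ∑ j, pd (pd (u t) j) j x + ∑ i, b i t x * pd (u t) i x) →
      (∀ x, u 0 x = f x) →
      norm01 1 u ≤ (1 + Cb0 * C₁) * norm1f f := by
  set a : ℝ := Real.exp 1 / √ν * n with ha
  have hn' : (0 : ℝ) < n := by exact_mod_cast hn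
  have hsν : 0 < √ν := Real.sqrt_pos.2 hν
  have ha0 : 0 < a := by positivity
  refine ⟨2 * a + 4 * a ^ 2, by positivity, ?_⟩
  rintro b f u B - - ⟨Mb, hMb⟩ - - hB - hf ⟨Mf, hMf⟩ - ⟨Mu, hMu⟩ hcont hdt hdx hpde hu0
  have hbB : ∀ i, ∀ t ∈ Icc (0 : ℝ) 1, ∀ x, |b i t x| ≤ B := fun i t ht x =>
    (abs_le_sup0 (fun t ht x => (hMb i t ht x).1) ht x).trans (hB i)
  have hB0 : 0 ≤ B := (abs_nonneg _).trans (hbB ⟨0, hn⟩ 0 (by simp) 0)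
  have hsol : IsHeatSolution ν (fun t x => ∑ i, b i t x * pd (u t) i x) u :=
    { cont := hcont
      diff := fun t ht => (hdx t ht).1
      diff_pd := fun t ht j => ((hdx t ht).2 j).1
      eq := fun t ht x => by rw [← hpde x t ht]; exact (hdt x t ht).hasDerivAt }
  have hgrad : ∀ t ∈ Ioo (0 : ℝ) 1, ∀ x,
      |∑ i, b i t x * pd (u t) i x| ≤ B * ∑ j, |pd (u t) j x| := by
    intro t ht x
    refine (Finset.abs_sum_le_sum_abs _ _).trans ?_
    rw [Finset.mul_sum]
    refine Finset.sum_le_sum fun i _ => ?_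
    rw [abs_mul]
    exact mul_le_mul_of_nonneg_right (hbB i t (Ioo_subset_Icc_self ht) x) (abs_nonneg _)
  have hu0' : u 0 = f := funext hu0
  set F := supS f with hFdef
  set L : Fin n → ℝ := fun j => supS (pd f j) with hLdef
  have hfF : ∀ x, |f x| ≤ F := abs_le_supS fun x => (hMf x).1
  have hfL : ∀ j x, |pd f j x| ≤ L j := fun j => abs_le_supS fun x => (hMf x).2 j
  have hF0 : 0 ≤ F := (abs_nonneg _).trans (hfF 0)
  have hL0 : ∀ j, 0 ≤ L j := fun j => (abs_nonneg _).trans (hfL j 0)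
  have huF : ∀ t ∈ Icc (0 : ℝ) 1, ∀ x, |u t x| ≤ F := fun t ht x =>
    hsol.abs_le_of_initial_abs_le hν.le hB0 (fun t ht x => (hMu t ht x).1) hgrad
      (by rw [hu0']; exact hfF) ht x
  set m : Fin n → ℝ := fun j => sup0 1 fun t x => pd (u t) j x with hmdef
  have hum : ∀ j, ∀ t ∈ Icc (0 : ℝ) 1, ∀ x, |pd (u t) j x| ≤ m j := fun j t ht x =>
    abs_le_sup0 (fun t ht x => (hMu t ht x).2 j) ht x
  set M := ∑ j, m j with hMdef
  have hM0 : 0 ≤ M := Finset.sum_nonneg fun j _ => (abs_nonneg _).trans (hum j 0 (by simp) 0)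
  have hsource : ∀ t ∈ Ioo (0 : ℝ) 1, ∀ x, |∑ i, b i t x * pd (u t) i x| ≤ B * M :=
    fun t ht x => (hgrad t ht x).trans (mul_le_mul_of_nonneg_left
      (Finset.sum_le_sum fun j _ => hum j t (Ioo_subset_Icc_self ht) x) hB0)
  have hscale : ∀ q : ℝ, 0 < q → ∀ i, ∀ t ∈ Ico (0 : ℝ) 1, ∀ x, |pd (u t) i x| ≤
      L i + Real.exp 1 / √ν * (B * M) * q +
        if t ≤ q ^ 2 then 0 else Real.exp 1 / √ν * F / q := fun q hq i t ht x =>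
    hsol.abs_pd_le_of_scale hν (by positivity) (hL0 i) hq huF hsource
      (by rw [hu0']; exact hfL i) ht x
  have hsum : ∀ k : ℝ, (∀ i, ∀ t ∈ Ico (0 : ℝ) 1, ∀ x, |pd (u t) i x| ≤ L i + k) →
      M ≤ ∑ j, L j + n * k := by
    intro k hk
    calc M ≤ ∑ j, (L j + k) := Finset.sum_le_sum fun j _ =>
          sup0_le fun t ht x => hsol.abs_pd_le_of_abs_pd_le_Ico (hk j) ht x
      _ = _ := by simp [Finset.sum_add_distrib]
  have hS0 : 0 ≤ ∑ j, L j := Finset.sum_nonneg fun j _ => hL0 j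
  set S := ∑ j, L j with hSdef
  have hM : M ≤ S + 2 * a * B * S + 4 * a ^ 2 * B * F := by
    rcases le_or_gt (a * B) (1 / 2) with hsmall | hlarge
    · have h1 := hsum (Real.exp 1 / √ν * (B * M)) fun i t ht x => by
        have := hscale 1 one_pos i t ht x
        rw [if_pos (by linarith [ht.2])] at this
        linarith
      have h2 : M ≤ S + a * B * M := by
        refine h1.trans (le_of_eq ?_)
        rw [ha]; ring
      have h3 : a * B * M ≤ 1 / 2 * M := mul_le_mul_of_nonneg_right hsmall hM0
      have h4 : a * B * M ≤ a * B * (2 * S) :=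
        mul_le_mul_of_nonneg_left (by linarith) (by positivity)
      have h5 : 0 ≤ 4 * a ^ 2 * B * F := by positivity
      linarith
    · have haB : 0 < a * B := by linarith
      have hBpos : 0 < B := pos_of_mul_pos_right haB ha0.le
      set q : ℝ := 1 / (2 * (a * B)) with hq
      have hq0 : 0 < q := by positivity
      have h1 := hsum (Real.exp 1 / √ν * (B * M) * q + Real.exp 1 / √ν * F / q)
        fun i t ht x => by
          have := hscale q hq0 i t ht x
          have hpos : 0 ≤ Real.exp 1 / √ν * F / q := by positivity
          split_ifs at this <;> linarith
      have h2 : n * (Real.exp 1 / √ν * (B * M) * q + Real.exp 1 / √ν * F / q) =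
          M / 2 + 2 * a ^ 2 * B * F := by
        have e1 : n * (Real.exp 1 / √ν * (B * M) * q + Real.exp 1 / √ν * F / q) =
            a * B * q * M + a * F / q := by rw [ha]; ring
        have e2 : a * B * q = 1 / 2 := by rw [hq]; field_simp
        have e3 : a * F / q = 2 * a ^ 2 * B * F := by rw [hq]; field_simp
        rw [e1, e2, e3]; ring
      have h3 : 1 / 2 * S ≤ a * B * S := mul_le_mul_of_nonneg_right hlarge.le hS0
      linarith
  have hsup : sup0 1 u ≤ F := sup0_le huF
  have h1 : 0 ≤ 2 * a * B * F := by positivity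
  have h2 : 0 ≤ 4 * a ^ 2 * B * S := by positivity
  calc norm01 1 u = sup0 1 u + M := rfl
    _ ≤ (1 + B * (2 * a + 4 * a ^ 2)) * (F + S) := by linarith
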